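/- There is an absolute constant C such that for every a > 0, every c ∈ ℝ, and every z = α + iβ ∈ ℂ, one has ∫_{0}^{∞} ∫_{v}^{∞} ((α - c - u)² + (β - v)²)^{-1/2} · (u² + v²)^{-1/4} · e^{-a·u·v} du dv ≤ C · a^{-1/4}. -/

import Mathlib

open Real MeasureTheory

/-- The bound `A⁻¹ B^{-1/2} ≤ A^{-3/2} + B^{-3/2}`, written for squares
`x = A²`, `y = B²`. -/
lemma rpow_neg_half_mul_rpow_neg_quarter_le {x y : ℝ} (hx : 0 < x) (hy : 0 < y) :
    x ^ (-(1 : ℝ) / 2) * y ^ (-(1 : ℝ) / 4) ≤ x ^ (-(3 : ℝ) / 4) + y ^ (-(3 : ℝ) / 4) := by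
  rcases le_total x y with h | h
  · calc x ^ (-(1 : ℝ) / 2) * y ^ (-(1 : ℝ) / 4)
        ≤ x ^ (-(1 : ℝ) / 2) * x ^ (-(1 : ℝ) / 4) := by
          gcongr ?_ * ?_
          exact rpow_le_rpow_of_nonpos hx h (by norm_num)
      _ = x ^ (-(3 : ℝ) / 4) := by rw [← rpow_add hx]; norm_num
      _ ≤ _ := le_add_of_nonneg_right (by positivity)
  · calc x ^ (-(1 : ℝ) / 2) * y ^ (-(1 : ℝ) / 4)
        ≤ y ^ (-(1 : ℝ) / 2) * y ^ (-(1 : ℝ) / 4) := by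
          gcongr ?_ * ?_
          exact rpow_le_rpow_of_nonpos hy h (by norm_num)
      _ = y ^ (-(3 : ℝ) / 4) := by rw [← rpow_add hy]; norm_num
      _ ≤ _ := le_add_of_nonneg_left (by positivity)

lemma integrable_one_add_sq_rpow :
    Integrable fun t : ℝ => (1 + t ^ 2) ^ (-(3 : ℝ) / 4) := by
  have h := integrable_rpow_neg_one_add_norm_sq (E := ℝ) (μ := volume) (r := 3 / 2)
    (by norm_num)
  convert h using 2 with t
  rw [Real.norm_eq_abs, sq_abs]
  norm_num

lemma sq_add_sq_rpow_eq (s : ℝ) {w : ℝ} (hw : w ≠ 0) :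
    (s ^ 2 + w ^ 2) ^ (-(3 : ℝ) / 4) =
      |w| ^ (-(3 : ℝ) / 2) * (1 + (s / w) ^ 2) ^ (-(3 : ℝ) / 4) := by
  have h : s ^ 2 + w ^ 2 = |w| ^ (2 : ℝ) * (1 + (s / w) ^ 2) := by
    rw [rpow_two, sq_abs]
    field_simp
    ring
  rw [h, mul_rpow (by positivity) (by positivity), ← rpow_mul (abs_nonneg w)]
  norm_num

lemma integrable_sub_sq_add_sq_rpow (x : ℝ) {w : ℝ} (hw : w ≠ 0) :
    Integrable fun u : ℝ => ((x - u) ^ 2 + w ^ 2) ^ (-(3 : ℝ) / 4) := by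
  simp_rw [sq_add_sq_rpow_eq _ hw]
  exact ((integrable_one_add_sq_rpow.comp_div hw).comp_sub_left x).const_mul _

lemma integral_sub_sq_add_sq_rpow (x : ℝ) {w : ℝ} (hw : w ≠ 0) :
    ∫ u : ℝ, ((x - u) ^ 2 + w ^ 2) ^ (-(3 : ℝ) / 4) =
      (∫ t : ℝ, (1 + t ^ 2) ^ (-(3 : ℝ) / 4)) * |w| ^ (-(1 : ℝ) / 2) := by
  rw [integral_sub_left_eq_self (fun s : ℝ => (s ^ 2 + w ^ 2) ^ (-(3 : ℝ) / 4)) volume x]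
  simp_rw [sq_add_sq_rpow_eq _ hw]
  rw [integral_const_mul,
    Measure.integral_comp_div (fun t : ℝ => (1 + t ^ 2) ^ (-(3 : ℝ) / 4)) w, smul_eq_mul,
    ← mul_assoc, mul_comm, ← rpow_add_one (abs_ne_zero.2 hw)]
  norm_num

lemma integral_abs_rpow_mul_exp_neg_mul_sq {a : ℝ} (ha : 0 < a) :
    ∫ v : ℝ, |v| ^ (-(1 : ℝ) / 2) * exp (-a * v ^ 2) = a ^ (-(1 : ℝ) / 4) * Gamma (1 / 4) := by
  have h := integral_comp_abs (f := fun v : ℝ => v ^ (-(1 : ℝ) / 2) * exp (-a * v ^ (2 : ℝ)))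
  rw [integral_rpow_mul_exp_neg_mul_rpow two_pos (by norm_num) ha] at h
  simp only [rpow_two, sq_abs] at h
  rw [h]
  norm_num
  ring

lemma integrable_abs_rpow_mul_exp_neg_mul_sq {a : ℝ} (ha : 0 < a) :
    Integrable fun v : ℝ => |v| ^ (-(1 : ℝ) / 2) * exp (-a * v ^ 2) := by
  refine Integrable.of_integral_ne_zero ?_
  rw [integral_abs_rpow_mul_exp_neg_mul_sq ha]
  have := Gamma_pos_of_pos (show (0 : ℝ) < 1 / 4 by norm_num)
  positivity

/-- A decreasing kernel times a Gaussian is bounded by the sum of the two recentred products. -/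
lemma abs_sub_rpow_mul_exp_le {a v β : ℝ} (ha : 0 < a) (hv : v ≠ 0) (hβ : v ≠ β) :
    |v - β| ^ (-(1 : ℝ) / 2) * exp (-a * v ^ 2) ≤
      |v| ^ (-(1 : ℝ) / 2) * exp (-a * v ^ 2) +
        |v - β| ^ (-(1 : ℝ) / 2) * exp (-a * (v - β) ^ 2) := by
  rcases le_total |v| |v - β| with h | h
  · refine le_add_of_le_of_nonneg ?_ (by positivity)
    gcongr ?_ * _
    exact rpow_le_rpow_of_nonpos (abs_pos.2 hv) h (by norm_num)
  · refine le_add_of_nonneg_of_le (by positivity) ?_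
    gcongr _ * exp ?_
    have := sq_le_sq.2 h
    nlinarith

lemma integral_cauchy_kernel_le {a v β : ℝ} (x : ℝ) (ha : 0 < a) (hv : 0 < v) (hβ : v ≠ β) :
    ∫ u in Set.Ioi v, ((x - u) ^ 2 + (β - v) ^ 2) ^ (-(1 : ℝ) / 2) *
        (u ^ 2 + v ^ 2) ^ (-(1 : ℝ) / 4) * exp (-a * u * v) ≤
      (∫ t : ℝ, (1 + t ^ 2) ^ (-(3 : ℝ) / 4)) *
        (|v - β| ^ (-(1 : ℝ) / 2) + |v| ^ (-(1 : ℝ) / 2)) * exp (-a * v ^ 2) := by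
  have hw : β - v ≠ 0 := sub_ne_zero.2 hβ.symm
  have hi₁ := integrable_sub_sq_add_sq_rpow x hw
  have hi₂ := integrable_sub_sq_add_sq_rpow 0 hv.ne'
  have hi := (hi₁.add hi₂).mul_const (exp (-a * v ^ 2))
  calc _ ≤ ∫ u in Set.Ioi v, (((x - u) ^ 2 + (β - v) ^ 2) ^ (-(3 : ℝ) / 4) +
          ((0 - u) ^ 2 + v ^ 2) ^ (-(3 : ℝ) / 4)) * exp (-a * v ^ 2) := by
        refine integral_mono_of_nonneg (.of_forall fun u => by positivity) hi.integrableOn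
          ((ae_restrict_mem measurableSet_Ioi).mono fun u hu => ?_)
        have hu : v < u := hu
        have hx : 0 < (x - u) ^ 2 + (β - v) ^ 2 := by positivity
        have hy : 0 < u ^ 2 + v ^ 2 := by positivity
        have key := rpow_neg_half_mul_rpow_neg_quarter_le hx hy
        have hexp : -a * u * v ≤ -a * v ^ 2 := by nlinarith [mul_pos ha hv]
        simp only [zero_sub, neg_sq]
        gcongr
    _ ≤ ∫ u, (((x - u) ^ 2 + (β - v) ^ 2) ^ (-(3 : ℝ) / 4) +
          ((0 - u) ^ 2 + v ^ 2) ^ (-(3 : ℝ) / 4)) * exp (-a * v ^ 2) :=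
        setIntegral_le_integral hi (.of_forall fun u => by positivity)
    _ = _ := by
        rw [integral_mul_const, integral_add hi₁ hi₂, integral_sub_sq_add_sq_rpow x hw,
          integral_sub_sq_add_sq_rpow 0 hv.ne', abs_sub_comm β v]
        ring

/-- Double-integral estimate `I₂` in the ∂̄-problem: with Cauchy kernel, the
square-root singularity `(u²+v²)^{-1/4}` and decay `e^{-auv}`, the integral over
`{0 < v < u}` is `O(a^{-1/4})` with an absolute constant. -/
theorem stmt_11 : ∃ C : ℝ, 0 < C ∧
    ∀ (a : ℝ), 0 < a → ∀ (c α β : ℝ),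
      (∫ v in Set.Ioi (0 : ℝ), ∫ u in Set.Ioi v,
          ((α - c - u) ^ 2 + (β - v) ^ 2) ^ (-(1 : ℝ) / 2) *
            (u ^ 2 + v ^ 2) ^ (-(1 : ℝ) / 4) * Real.exp (-a * u * v)) ≤
        C * a ^ (-(1 : ℝ) / 4) := by
  have hΓ := Gamma_pos_of_pos (show (0 : ℝ) < 1 / 4 by norm_num)
  set K : ℝ := ∫ t : ℝ, (1 + t ^ 2) ^ (-(3 : ℝ) / 4) with hK
  have hK0 : 0 ≤ K := integral_nonneg fun t => by positivity
  refine ⟨3 * K * Gamma (1 / 4) + 1, by positivity, fun a ha c α β => ?_⟩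
  let h : ℝ → ℝ := fun v => |v| ^ (-(1 : ℝ) / 2) * exp (-a * v ^ 2)
  have hh : Integrable h := integrable_abs_rpow_mul_exp_neg_mul_sq ha
  have hh0 : ∀ v, 0 ≤ h v := fun v => by positivity
  have hi₁ : Integrable fun v => 2 * h v := hh.const_mul 2
  have hi₂ : Integrable fun v => h (v - β) := hh.comp_sub_right β
  have hi : Integrable fun v => K * (2 * h v + h (v - β)) := (hi₁.add hi₂).const_mul K
  calc _ ≤ ∫ v in Set.Ioi (0 : ℝ), K * (2 * h v + h (v - β)) := by
        refine integral_mono_of_nonneg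
          (.of_forall fun v => integral_nonneg fun u => by positivity) hi.integrableOn ?_
        filter_upwards [ae_restrict_mem measurableSet_Ioi,
          ae_restrict_of_ae (Measure.ae_ne volume β)] with v hv hβ
        have hv : 0 < v := hv
        refine (integral_cauchy_kernel_le (α - c) ha hv hβ).trans ?_
        rw [← hK, mul_assoc]
        gcongr
        have := abs_sub_rpow_mul_exp_le ha hv.ne' hβ
        simp only [h]
        linarith
    _ ≤ ∫ v, K * (2 * h v + h (v - β)) :=
        setIntegral_le_integral hi
          (.of_forall fun v => mul_nonneg hK0 (by linarith [hh0 v, hh0 (v - β)]))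
    _ = 3 * K * Gamma (1 / 4) * a ^ (-(1 : ℝ) / 4) := by
        rw [integral_const_mul, integral_add hi₁ hi₂, integral_const_mul,
          integral_sub_right_eq_self h β, integral_abs_rpow_mul_exp_neg_mul_sq ha]
        ring
    _ ≤ _ := by
        gcongr
        linarith
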